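/- The set {1/6, 7/12, 11/12} = {S₁(2/3), S₂S₁(2/3), S₂S₂(2/3)} is an optimal set of three-means for P, and the third quantization error is V₃ = 55/9792. -/

import Mathlib

open MeasureTheory Set
open scoped ENNReal Classical

noncomputable section

/-- The similarity map `S₁(x) = x/4`. -/
def S1 (x : ℝ) : ℝ := x / 4

/-- The similarity map `S₂(x) = x/2 + 1/2`. -/
def S2 (x : ℝ) : ℝ := x / 2 + 1 / 2

/-- `P` satisfies the self-similarity relation `P = (1/4)·P∘S₁⁻¹ + (3/4)·P∘S₂⁻¹`. -/
def SelfSimilar (P : Measure ℝ) : Prop :=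
  P = (1/4 : ℝ≥0∞) • P.map S1 + (3/4 : ℝ≥0∞) • P.map S2

/-- For a word `σ` over `{1,2}` (encoded as `Fin 2`, `0 ↦ S₁`, `1 ↦ S₂`),
the composition `S_σ = S_{σ₁} ∘ ⋯ ∘ S_{σ_k}`. -/
def Sw : List (Fin 2) → ℝ → ℝ
  | [] => id
  | i :: σ => (if i = 0 then S1 else S2) ∘ Sw σ

/-- `p_σ`, the product of the probabilities `p₁ = 1/4`, `p₂ = 3/4` along `σ`. -/
def pw : List (Fin 2) → ℝ
  | [] => 1
  | i :: σ => (if i = 0 then (1:ℝ)/4 else 3/4) * pw σ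

/-- `s_σ`, the product of the contraction ratios `s₁ = 1/4`, `s₂ = 1/2` along `σ`. -/
def sw : List (Fin 2) → ℝ
  | [] => 1
  | i :: σ => (if i = 0 then (1:ℝ)/4 else 1/2) * sw σ

/-- `c(σ)`, the number of occurrences of the symbol `1` (encoded `0`) in `σ`. -/
def cnt (σ : List (Fin 2)) : ℕ := σ.count 0

/-- The cylinder interval `J_σ = S_σ([0,1])`. -/
def J (σ : List (Fin 2)) : Set ℝ := Sw σ '' Set.Icc 0 1

/-- The distortion error `V(P;α) = ∫ min_{a ∈ α} (x-a)² dP`. -/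
def distortion (P : Measure ℝ) (α : Finset ℝ) : ℝ :=
  ∫ x, sInf ((fun a => (x - a) ^ 2) '' (α : Set ℝ)) ∂P

/-- The `n`-th quantization error `V_n`. -/
def qError (P : Measure ℝ) (n : ℕ) : ℝ :=
  sInf {e | ∃ α : Finset ℝ, α.Nonempty ∧ α.card ≤ n ∧ e = distortion P α}

/-- `α` is an optimal set of `n`-means for `P`. -/
def IsOptimal (P : Measure ℝ) (n : ℕ) (α : Finset ℝ) : Prop :=
  α.Nonempty ∧ α.card ≤ n ∧ distortion P α = qError P n

/-- `q_σ := P(J_σ) · λ(J_σ)²`. -/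
def qnt (P : Measure ℝ) (σ : List (Fin 2)) : ℝ :=
  (P (J σ)).toReal * ((volume (J σ)).toReal) ^ 2

/-! `P` lives on `[0, 1]`, and self-similarity gives
`V(P; α) = V(P; 4α) / 64 + 3 V(P; 2α - 1) / 16`.
The distance from `X` to a pair with midpoint `m` is `| |X - m| - d |` for a constant `d`, so the
distortion of the pair is at least `Var |X - m| = E (X - m)² - (E |X - m|)²`. The estimate
`(E |X - m|)² ≤ (2/3 - m)² + 1/12`, sharp at `m = 1/2`, then gives `V₂ = V₁ - 1/12 = 13/612`.
For a triple `a ≤ b ≤ c`, each of the two halves of `P` sees only the points that can be nearest to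
it, and according to which of `a + b` and `b + c` exceed `1` the triple splits into smaller
configurations, governed by the bounds for one and two points.
-/

lemma infDist_le_mul_infDist_of_mapsTo {X : Type*} [PseudoMetricSpace X] {f : X → X} {K : Set X}
    {r : NNReal} (hf : LipschitzWith r f) (hfK : MapsTo f K K) (hK : K.Nonempty) (x : X) :
    Metric.infDist (f x) K ≤ r * Metric.infDist x K := by
  have := hK.to_subtype
  rw [Metric.infDist_eq_iInf (x := x), Real.mul_iInf_of_nonneg r.coe_nonneg]
  exact le_ciInf fun y ↦ (Metric.infDist_le_dist_of_mem (hfK y.2)).trans (hf.dist_le_mul x y)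

section InvariantMeasure

variable {X : Type*} [MeasurableSpace X] {μ : Measure X}

lemma integrable_arctan [IsFiniteMeasure μ] {u : X → ℝ} (hu : Measurable u) :
    Integrable (fun x ↦ Real.arctan (u x)) μ :=
  .of_bound hu.arctan.aestronglyMeasurable (Real.pi / 2)
    (.of_forall fun x ↦ (abs_lt.2 (Real.arctan_mem_Ioo (u x))).le)

variable {f g : X → X} {p q : ℝ≥0∞}

lemma integral_eq_of_eq_smul_map_add_smul_map (hf : Measurable f) (hg : Measurable g)
    (hμ : μ = p • μ.map f + q • μ.map g) {φ : X → ℝ} (hφ : StronglyMeasurable φ)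
    (hint : Integrable φ μ) :
    ∫ x, φ x ∂μ = p.toReal * ∫ x, φ (f x) ∂μ + q.toReal * ∫ x, φ (g x) ∂μ := by
  rw [hμ, integrable_add_measure] at hint
  conv_lhs => rw [hμ]
  rw [integral_add_measure hint.1 hint.2, integral_smul_measure, integral_smul_measure,
    integral_map hf.aemeasurable hφ.aestronglyMeasurable,
    integral_map hg.aemeasurable hφ.aestronglyMeasurable, smul_eq_mul, smul_eq_mul]

-- By invariance, the bounded function `arctan ∘ infDist · K` has integral at most that of
-- `arctan (r * infDist · K)`, although it dominates it pointwise; so the two agree a.e.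
lemma ae_mem_of_eq_smul_map_add_smul_map [PseudoMetricSpace X] [BorelSpace X] [IsFiniteMeasure μ]
    {K : Set X} {r : NNReal} (hr : r < 1) (hf : LipschitzWith r f) (hg : LipschitzWith r g)
    (hKc : IsClosed K) (hK : K.Nonempty) (hfK : MapsTo f K K) (hgK : MapsTo g K K)
    (hpq : p + q = 1) (hμ : μ = p • μ.map f + q • μ.map g) : ∀ᵐ x ∂μ, x ∈ K := by
  let d : X → ℝ := fun x ↦ Metric.infDist x K
  have hd : Measurable d := (Metric.continuous_infDist_pt K).measurable
  have hint_d := integrable_arctan (μ := μ) hd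
  have hint_rd := integrable_arctan (μ := μ) (hd.const_mul (r : ℝ))
  have hcontract {h : X → X} (hh : LipschitzWith r h) (hhK : MapsTo h K K) :
      ∫ x, Real.arctan (d (h x)) ∂μ ≤ ∫ x, Real.arctan (r * d x) ∂μ :=
    integral_mono (integrable_arctan (hd.comp hh.continuous.measurable)) hint_rd fun x ↦
      Real.arctan_mono (infDist_le_mul_infDist_of_mapsTo hh hhK hK x)
  have hle : ∫ x, Real.arctan (d x) ∂μ ≤ ∫ x, Real.arctan (r * d x) ∂μ := by
    have hpq' : p.toReal + q.toReal = 1 := by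
      rw [← ENNReal.toReal_add (ne_top_of_le_ne_top ENNReal.one_ne_top (hpq ▸ le_self_add))
        (ne_top_of_le_ne_top ENNReal.one_ne_top (hpq ▸ le_add_self)), hpq, ENNReal.toReal_one]
    rw [integral_eq_of_eq_smul_map_add_smul_map hf.continuous.measurable
      hg.continuous.measurable hμ hd.arctan.stronglyMeasurable hint_d]
    calc p.toReal * ∫ x, Real.arctan (d (f x)) ∂μ + q.toReal * ∫ x, Real.arctan (d (g x)) ∂μ
        ≤ p.toReal * ∫ x, Real.arctan (r * d x) ∂μ + q.toReal * ∫ x, Real.arctan (r * d x) ∂μ :=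
          add_le_add (mul_le_mul_of_nonneg_left (hcontract hf hfK) ENNReal.toReal_nonneg)
            (mul_le_mul_of_nonneg_left (hcontract hg hgK) ENNReal.toReal_nonneg)
      _ = ∫ x, Real.arctan (r * d x) ∂μ := by rw [← add_mul, hpq', one_mul]
  have hpt (x : X) : Real.arctan (r * d x) ≤ Real.arctan (d x) :=
    Real.arctan_mono (mul_le_of_le_one_left Metric.infDist_nonneg (by exact_mod_cast hr.le))
  have hae := (integral_eq_iff_of_ae_le hint_rd hint_d (.of_forall hpt)).1
    (le_antisymm (integral_mono hint_rd hint_d hpt) hle)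
  filter_upwards [hae] with x hx
  have hfix : (1 - (r : ℝ)) * d x = 0 := by linarith [Real.arctan_injective hx]
  have hr' : (1 - (r : ℝ)) ≠ 0 := (sub_pos.2 (by exact_mod_cast hr)).ne'
  exact (hKc.mem_iff_infDist_zero hK).2 ((mul_eq_zero.1 hfix).resolve_left hr')

end InvariantMeasure

lemma abs_sub_le_abs_sub_left {p q x : ℝ} (hpq : p ≤ q) (h : 2 * x ≤ p + q) :
    |x - p| ≤ |x - q| :=
  (abs_le.2 ⟨by linarith, by linarith⟩ : |x - p| ≤ -(x - q)).trans (neg_le_abs _)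

lemma abs_sub_le_abs_sub_right {p q x : ℝ} (hpq : p ≤ q) (h : p + q ≤ 2 * x) :
    |x - q| ≤ |x - p| :=
  (abs_le.2 ⟨by linarith, by linarith⟩ : |x - q| ≤ x - p).trans (le_abs_self _)

lemma exists_subset_triple_of_card_le_three {ι : Type*} [LinearOrder ι] [Infinite ι]
    {α : Finset ι} (hα : α.card ≤ 3) :
    ∃ a b c, a ≤ b ∧ b ≤ c ∧ (α : Set ι) ⊆ {a, b, c} := by
  obtain ⟨β, hαβ, hβ⟩ := Infinite.exists_superset_card_eq α 3 hα
  let e := β.orderEmbOfFin hβ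
  refine ⟨e 0, e 1, e 2, e.monotone (by decide), e.monotone (by decide), fun x hx ↦ ?_⟩
  obtain ⟨i, rfl⟩ : x ∈ Set.range e := by
    rw [Finset.range_orderEmbOfFin]
    exact hαβ hx
  fin_cases i <;> simp

section Distortion

lemma sInf_image_sq_sub_nonneg (α : Finset ℝ) (x : ℝ) :
    0 ≤ sInf ((fun a ↦ (x - a) ^ 2) '' (α : Set ℝ)) :=
  Real.sInf_nonneg (by rintro _ ⟨a, -, rfl⟩; positivity)

lemma sInf_image_sq_sub_le {α β : Finset ℝ} {x : ℝ} (hα : α.Nonempty)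
    (h : ∀ a ∈ α, ∃ b ∈ β, |x - b| ≤ |x - a|) :
    sInf ((fun b ↦ (x - b) ^ 2) '' (β : Set ℝ)) ≤ sInf ((fun a ↦ (x - a) ^ 2) '' (α : Set ℝ)) := by
  refine le_csInf ((Finset.coe_nonempty.2 hα).image _) ?_
  rintro _ ⟨a, ha, rfl⟩
  obtain ⟨b, hb, hba⟩ := h a ha
  exact (csInf_le (β.finite_toSet.image _).bddBelow ⟨b, hb, rfl⟩).trans (sq_le_sq.2 hba)

lemma sInf_image_sq_mul_add_sub {s : ℝ} (hs : s ≠ 0) (d x : ℝ) (α : Finset ℝ) :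
    sInf ((fun a ↦ (s * x + d - a) ^ 2) '' (α : Set ℝ)) =
      s ^ 2 * sInf ((fun a ↦ (x - a) ^ 2) '' (α.image fun a ↦ (a - d) / s : Finset ℝ)) := by
  rw [← smul_eq_mul (s ^ 2), ← Real.sInf_smul_of_nonneg (sq_nonneg s), ← image_smul,
    Finset.coe_image, image_image, image_image]
  congr! 2 with a
  rw [smul_eq_mul]
  field_simp
  ring

lemma continuous_sInf_image_sq_sub {α : Finset ℝ} (hα : α.Nonempty) :
    Continuous fun x : ℝ ↦ sInf ((fun a ↦ (x - a) ^ 2) '' (α : Set ℝ)) := by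
  simp_rw [← Finset.inf'_eq_csInf_image α hα]
  exact Continuous.finset_inf'_apply hα fun a _ ↦ by fun_prop

lemma distortion_singleton (μ : Measure ℝ) (a : ℝ) : distortion μ {a} = ∫ x, (x - a) ^ 2 ∂μ := by
  simp only [distortion, Finset.coe_singleton, image_singleton, csInf_singleton]

lemma distortion_pair (μ : Measure ℝ) (a b : ℝ) :
    distortion μ {a, b} = ∫ x, min ((x - a) ^ 2) ((x - b) ^ 2) ∂μ := by
  simp only [distortion, Finset.coe_pair, image_pair, csInf_pair]

lemma distortion_nonneg (μ : Measure ℝ) (α : Finset ℝ) : 0 ≤ distortion μ α :=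
  integral_nonneg (sInf_image_sq_sub_nonneg α)

variable {μ : Measure ℝ}

lemma integrable_sInf_image_sq_sub [IsFiniteMeasure μ] (hμ : MemLp id 2 μ) {α : Finset ℝ}
    (hα : α.Nonempty) : Integrable (fun x ↦ sInf ((fun a ↦ (x - a) ^ 2) '' (α : Set ℝ))) μ := by
  obtain ⟨a, ha⟩ := hα
  refine (hμ.sub (memLp_const a)).integrable_sq.mono'
    (continuous_sInf_image_sq_sub ⟨a, ha⟩).aestronglyMeasurable (.of_forall fun x ↦ ?_)
  rw [Real.norm_of_nonneg (sInf_image_sq_sub_nonneg α x)]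
  exact csInf_le (α.finite_toSet.image _).bddBelow ⟨a, ha, rfl⟩

lemma distortion_le_of_ae [IsFiniteMeasure μ] (hμ : MemLp id 2 μ) {α β : Finset ℝ}
    (hα : α.Nonempty) (h : ∀ᵐ x ∂μ, ∀ a ∈ α, ∃ b ∈ β, |x - b| ≤ |x - a|) :
    distortion μ β ≤ distortion μ α :=
  integral_mono_of_nonneg (.of_forall (sInf_image_sq_sub_nonneg β))
    (integrable_sInf_image_sq_sub hμ hα) (h.mono fun _ ↦ sInf_image_sq_sub_le hα)

lemma distortion_anti [IsFiniteMeasure μ] (hμ : MemLp id 2 μ) {α β : Finset ℝ} (hα : α.Nonempty)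
    (hαβ : α ⊆ β) : distortion μ β ≤ distortion μ α :=
  distortion_le_of_ae hμ hα (.of_forall fun _ a ha ↦ ⟨a, hαβ ha, le_rfl⟩)

lemma distortion_singleton_eq_variance_add [IsProbabilityMeasure μ] (hμ : MemLp id 2 μ) (a : ℝ) :
    distortion μ {a} = ProbabilityTheory.variance id μ + (∫ x, x ∂μ - a) ^ 2 := by
  have hvar := ProbabilityTheory.variance_eq_sub (hμ.sub (memLp_const a))
  have hid : Integrable (fun x : ℝ ↦ x) μ := hμ.integrable one_le_two
  have hmean : ∫ x, (x - a) ∂μ = ∫ x, x ∂μ - a := by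
    rw [integral_sub hid (integrable_const a), integral_const, probReal_univ,
      one_smul]
  rw [distortion_singleton, ← ProbabilityTheory.variance_sub_const hμ.aestronglyMeasurable a,
    ← hmean]
  exact sub_eq_iff_eq_add.1 hvar.symm

/-- The mean absolute deviation `∫ |x - t| dμ` of `μ` about the point `t`. It controls the
two-point distortions of `μ`. -/
def meanAbsDev (μ : Measure ℝ) (t : ℝ) : ℝ := ∫ x, |x - t| ∂μ

lemma min_sq_sub_sq_sub (a b x : ℝ) :
    min ((x - a) ^ 2) ((x - b) ^ 2) = (|x - (a + b) / 2| - |b - a| / 2) ^ 2 := by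
  have hdist : (|x - (a + b) / 2| - |b - a| / 2) ^ 2 =
      (x - (a + b) / 2) ^ 2 + ((b - a) / 2) ^ 2 - |(x - (a + b) / 2) * (b - a)| := by
    rw [abs_mul, ← sq_abs (x - (a + b) / 2), div_pow, ← sq_abs (b - a)]
    ring
  rw [hdist]
  rcases le_total 0 ((x - (a + b) / 2) * (b - a)) with h | h
  · rw [abs_of_nonneg h, min_eq_right (by linarith)]
    ring
  · rw [abs_of_nonpos h, min_eq_left (by linarith)]
    ring

-- The distance to the pair `{a, b}` is `||x - (a + b) / 2| - |b - a| / 2|`, so the pair distortion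
-- is the mean square of `|x - (a + b) / 2|` about a constant, hence at least its variance.
lemma distortion_midpoint_sub_sq_meanAbsDev_le_distortion_pair [IsProbabilityMeasure μ]
    (hμ : MemLp id 2 μ) (a b : ℝ) :
    distortion μ {(a + b) / 2} - meanAbsDev μ ((a + b) / 2) ^ 2 ≤ distortion μ {a, b} := by
  set m := (a + b) / 2 with hm
  have habs : MemLp (fun x ↦ |x - m|) 2 μ := (hμ.sub (memLp_const m)).abs
  calc distortion μ {m} - meanAbsDev μ m ^ 2
      = ProbabilityTheory.variance (fun x ↦ |x - m|) μ := by
        rw [ProbabilityTheory.variance_eq_sub habs, distortion_singleton, meanAbsDev]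
        simp only [Pi.pow_apply, sq_abs]
    _ = ProbabilityTheory.variance (fun x ↦ |x - m| - |b - a| / 2) μ :=
        (ProbabilityTheory.variance_sub_const habs.aestronglyMeasurable _).symm
    _ ≤ ∫ x, (|x - m| - |b - a| / 2) ^ 2 ∂μ :=
        ProbabilityTheory.variance_le_expectation_sq (habs.sub (memLp_const _)).aestronglyMeasurable
    _ = distortion μ {a, b} := by simp only [distortion_pair, min_sq_sub_sq_sub, hm]

end Distortion

lemma S1_eq_mul_add (x : ℝ) : S1 x = 1 / 4 * x + 0 := by
  rw [S1]
  ring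

lemma S2_eq_mul_add (x : ℝ) : S2 x = 1 / 2 * x + 1 / 2 := by
  rw [S2]
  ring

lemma lipschitzWith_S1 : LipschitzWith (1 / 2) S1 := by
  refine LipschitzWith.of_dist_le_mul fun x y ↦ ?_
  rw [Real.dist_eq, Real.dist_eq, S1, S1, ← sub_div, abs_div, abs_of_pos (four_pos : (0 : ℝ) < 4)]
  push_cast
  linarith [abs_nonneg (x - y)]

lemma lipschitzWith_S2 : LipschitzWith (1 / 2) S2 := by
  refine LipschitzWith.of_dist_le_mul fun x y ↦ ?_
  rw [Real.dist_eq, Real.dist_eq, S2, S2, add_sub_add_right_eq_sub, ← sub_div, abs_div, abs_two]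
  push_cast
  linarith

lemma mapsTo_S1_Icc : MapsTo S1 (Icc 0 1) (Icc 0 1) := fun x ⟨h0, h1⟩ ↦ by
  constructor <;> simp only [S1] <;> linarith

lemma mapsTo_S2_Icc : MapsTo S2 (Icc 0 1) (Icc 0 1) := fun x ⟨h0, h1⟩ ↦ by
  constructor <;> simp only [S2] <;> linarith

namespace SelfSimilar

variable {P : Measure ℝ} [IsProbabilityMeasure P]

lemma ae_mem_Icc (hP : SelfSimilar P) : ∀ᵐ x ∂P, x ∈ Icc (0 : ℝ) 1 := by
  refine ae_mem_of_eq_smul_map_add_smul_map (by norm_num) lipschitzWith_S1 lipschitzWith_S2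
    isClosed_Icc (nonempty_Icc.2 zero_le_one) mapsTo_S1_Icc mapsTo_S2_Icc ?_ hP
  rw [ENNReal.div_add_div_same, show (1 + 3 : ℝ≥0∞) = 4 by norm_num]
  exact ENNReal.div_self (by norm_num) (by norm_num)

lemma memLp_of_continuous (hP : SelfSimilar P) {f : ℝ → ℝ} (hf : Continuous f) (p : ℝ≥0∞) :
    MemLp f p P := by
  obtain ⟨C, hC⟩ := isCompact_Icc.exists_bound_of_continuousOn (hf.continuousOn (s := Icc 0 1))
  exact .of_bound hf.aestronglyMeasurable C (hP.ae_mem_Icc.mono hC)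

lemma memLp_id (hP : SelfSimilar P) : MemLp id 2 P :=
  hP.memLp_of_continuous continuous_id 2

lemma integrable_of_continuous (hP : SelfSimilar P) {f : ℝ → ℝ} (hf : Continuous f) :
    Integrable f P :=
  memLp_one_iff_integrable.1 (hP.memLp_of_continuous hf 1)

lemma integral_mono_of_continuous (hP : SelfSimilar P) {f g : ℝ → ℝ} (hf : Continuous f)
    (hg : Continuous g) (hfg : ∀ x ∈ Icc (0 : ℝ) 1, f x ≤ g x) : ∫ x, f x ∂P ≤ ∫ x, g x ∂P :=
  integral_mono_ae (hP.integrable_of_continuous hf) (hP.integrable_of_continuous hg)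
    (hP.ae_mem_Icc.mono hfg)

lemma integral_eq_of_continuous (hP : SelfSimilar P) {f : ℝ → ℝ} (hf : Continuous f) :
    ∫ x, f x ∂P = 1 / 4 * ∫ x, f (S1 x) ∂P + 3 / 4 * ∫ x, f (S2 x) ∂P := by
  simpa using integral_eq_of_eq_smul_map_add_smul_map lipschitzWith_S1.continuous.measurable
    lipschitzWith_S2.continuous.measurable hP hf.stronglyMeasurable (hP.integrable_of_continuous hf)

lemma integral_affine (hP : SelfSimilar P) (s d : ℝ) :
    ∫ x, (s * x + d) ∂P = s * ∫ x, x ∂P + d := by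
  rw [integral_add (hP.integrable_of_continuous (by fun_prop)) (integrable_const d),
    integral_const_mul, integral_const, probReal_univ, one_smul]

lemma integral_id (hP : SelfSimilar P) : ∫ x, x ∂P = 2 / 3 := by
  have h := hP.integral_eq_of_continuous continuous_id
  simp only [id, S1_eq_mul_add, S2_eq_mul_add, hP.integral_affine] at h
  linarith

lemma distortion_eq_add (hP : SelfSimilar P) {α : Finset ℝ} (hα : α.Nonempty) :
    distortion P α = 1 / 64 * distortion P (α.image fun a ↦ 4 * a) +
      3 / 16 * distortion P (α.image fun a ↦ 2 * a - 1) := by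
  have hleft : (fun a : ℝ ↦ (a - 0) / (1 / 4)) = fun a ↦ 4 * a := by ext a; ring
  have hright : (fun a : ℝ ↦ (a - 1 / 2) / (1 / 2)) = fun a ↦ 2 * a - 1 := by ext a; ring
  rw [distortion, hP.integral_eq_of_continuous (continuous_sInf_image_sq_sub hα)]
  simp only [S1_eq_mul_add, S2_eq_mul_add, sInf_image_sq_mul_add_sub (one_div_ne_zero four_ne_zero),
    sInf_image_sq_mul_add_sub (one_div_ne_zero two_ne_zero), hleft, hright, integral_const_mul,
    distortion]
  ring

lemma variance_id (hP : SelfSimilar P) : ProbabilityTheory.variance id P = 16 / 153 := by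
  have h := hP.distortion_eq_add (Finset.singleton_nonempty 0)
  simp only [Finset.image_singleton, distortion_singleton_eq_variance_add hP.memLp_id,
    hP.integral_id] at h
  linarith

lemma distortion_singleton_eq (hP : SelfSimilar P) (a : ℝ) :
    distortion P {a} = 16 / 153 + (2 / 3 - a) ^ 2 := by
  rw [distortion_singleton_eq_variance_add hP.memLp_id, hP.variance_id, hP.integral_id]

lemma variance_le_distortion_singleton (hP : SelfSimilar P) (a : ℝ) :
    16 / 153 ≤ distortion P {a} := by
  rw [hP.distortion_singleton_eq]
  exact le_add_of_nonneg_right (sq_nonneg _)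

lemma distortion_le_of_forall_mem_Icc (hP : SelfSimilar P) {α β : Finset ℝ} (hα : α.Nonempty)
    (h : ∀ x ∈ Icc (0 : ℝ) 1, ∀ a ∈ α, ∃ b ∈ β, |x - b| ≤ |x - a|) :
    distortion P β ≤ distortion P α :=
  distortion_le_of_ae hP.memLp_id hα (hP.ae_mem_Icc.mono h)

lemma meanAbsDev_eq_add (hP : SelfSimilar P) (t : ℝ) :
    meanAbsDev P t = 1 / 16 * meanAbsDev P (4 * t) + 3 / 8 * meanAbsDev P (2 * t - 1) := by
  have hS1 (x : ℝ) : |S1 x - t| = 1 / 4 * |x - 4 * t| := by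
    rw [S1, show x / 4 - t = (x - 4 * t) / 4 by ring, abs_div, abs_of_pos (four_pos : (0 : ℝ) < 4)]
    ring
  have hS2 (x : ℝ) : |S2 x - t| = 1 / 2 * |x - (2 * t - 1)| := by
    rw [S2, show x / 2 + 1 / 2 - t = (x - (2 * t - 1)) / 2 by ring, abs_div, abs_two]
    ring
  rw [meanAbsDev, hP.integral_eq_of_continuous (by fun_prop)]
  simp only [hS1, hS2, integral_const_mul, meanAbsDev]
  ring

lemma meanAbsDev_of_nonpos (hP : SelfSimilar P) {t : ℝ} (ht : t ≤ 0) :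
    meanAbsDev P t = 2 / 3 - t := by
  have h : ∀ᵐ x ∂P, |x - t| = 1 * x + -t := by
    filter_upwards [hP.ae_mem_Icc] with x hx
    rw [abs_of_nonneg (by linarith [hx.1])]
    ring
  rw [meanAbsDev, integral_congr_ae h, hP.integral_affine, hP.integral_id]
  ring

lemma meanAbsDev_of_one_le (hP : SelfSimilar P) {t : ℝ} (ht : 1 ≤ t) :
    meanAbsDev P t = t - 2 / 3 := by
  have h : ∀ᵐ x ∂P, |x - t| = -1 * x + t := by
    filter_upwards [hP.ae_mem_Icc] with x hx
    rw [abs_of_nonpos (by linarith [hx.2])]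
    ring
  rw [meanAbsDev, integral_congr_ae h, hP.integral_affine, hP.integral_id]
  ring

-- The chord of the convex function `meanAbsDev P` over `[0, 1]`.
lemma meanAbsDev_le_of_mem_Icc (hP : SelfSimilar P) {t : ℝ} (ht : t ∈ Icc (0 : ℝ) 1) :
    meanAbsDev P t ≤ 2 / 3 - t / 3 := by
  calc meanAbsDev P t
      ≤ ∫ x, ((1 - 2 * t) * x + t) ∂P := by
        refine hP.integral_mono_of_continuous (by fun_prop) (by fun_prop) fun x hx ↦ ?_
        exact abs_le.2
          ⟨by nlinarith [hx.1, hx.2, ht.1, ht.2], by nlinarith [hx.1, hx.2, ht.1, ht.2]⟩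
    _ = 2 / 3 - t / 3 := by
        rw [hP.integral_affine, hP.integral_id]
        ring

lemma meanAbsDev_of_mem_Icc_quarter_half (hP : SelfSimilar P) {t : ℝ}
    (ht : t ∈ Icc (1 / 4 : ℝ) (1 / 2)) : meanAbsDev P t = 7 / 12 - t / 2 := by
  rw [hP.meanAbsDev_eq_add, hP.meanAbsDev_of_one_le (by linarith [ht.1]),
    hP.meanAbsDev_of_nonpos (by linarith [ht.2])]
  ring

lemma meanAbsDev_le_quadratic_of_quarter_le (hP : SelfSimilar P) {t : ℝ} (ht : 1 / 4 ≤ t) :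
    meanAbsDev P t ≤ 3 / 4 * t ^ 2 - t + 2 / 3 := by
  rcases le_total 1 t with h1 | h1
  · rw [hP.meanAbsDev_of_one_le h1]
    nlinarith [sq_nonneg (t - 4 / 3)]
  rcases le_total t (1 / 2) with h2 | h2
  · rw [hP.meanAbsDev_of_mem_Icc_quarter_half ⟨ht, h2⟩]
    nlinarith [sq_nonneg (t - 1 / 3)]
  · rw [hP.meanAbsDev_eq_add, hP.meanAbsDev_of_one_le (by linarith)]
    nlinarith [sq_nonneg (t - 2 / 3),
      hP.meanAbsDev_le_of_mem_Icc (t := 2 * t - 1) ⟨by linarith, by linarith⟩]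

-- On `[0, 1 / 4]` the difference of the two sides is multiplied by `16` under `t ↦ 4 * t`.
lemma meanAbsDev_le_quadratic (hP : SelfSimilar P) {t : ℝ} (ht : 0 ≤ t) :
    meanAbsDev P t ≤ 3 / 4 * t ^ 2 - t + 2 / 3 := by
  have of_pow_le (n : ℕ) : ∀ s : ℝ, (1 / 4) ^ n ≤ s →
      meanAbsDev P s ≤ 3 / 4 * s ^ 2 - s + 2 / 3 := by
    induction n with
    | zero =>
      exact fun s hs ↦ hP.meanAbsDev_le_quadratic_of_quarter_le
        (by linarith [pow_zero (1 / 4 : ℝ)])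
    | succ n ih =>
      intro s hs
      rcases le_total (1 / 4) s with h | h
      · exact hP.meanAbsDev_le_quadratic_of_quarter_le h
      · rw [pow_succ] at hs
        rw [hP.meanAbsDev_eq_add, hP.meanAbsDev_of_nonpos (t := 2 * s - 1) (by linarith)]
        nlinarith [ih (4 * s) (by linarith)]
  rcases ht.eq_or_lt with rfl | ht
  · rw [hP.meanAbsDev_of_nonpos le_rfl]
    norm_num
  · obtain ⟨n, hn⟩ := exists_pow_lt_of_lt_one ht (by norm_num : (1 / 4 : ℝ) < 1)
    exact of_pow_le n t hn.le

lemma sq_meanAbsDev_le (hP : SelfSimilar P) (t : ℝ) :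
    meanAbsDev P t ^ 2 ≤ (2 / 3 - t) ^ 2 + 1 / 12 := by
  have hnonneg : 0 ≤ meanAbsDev P t := integral_nonneg fun x ↦ abs_nonneg _
  rcases le_total t 0 with h0 | h0
  · rw [hP.meanAbsDev_of_nonpos h0]
    linarith
  rcases le_total 1 t with h1 | h1
  · rw [hP.meanAbsDev_of_one_le h1]
    nlinarith
  rcases le_total t (1 / 4) with h2 | h2
  · have hle : meanAbsDev P t ≤ 2 / 3 - t + 3 / 64 := by
      nlinarith [hP.meanAbsDev_le_quadratic h0]
    calc meanAbsDev P t ^ 2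
        ≤ (2 / 3 - t + 3 / 64) ^ 2 := by gcongr
      _ ≤ (2 / 3 - t) ^ 2 + 1 / 12 := by linarith
  rcases le_total t (1 / 2) with h3 | h3
  · rw [hP.meanAbsDev_of_mem_Icc_quarter_half ⟨h2, h3⟩]
    nlinarith [sq_nonneg (t - 1 / 2)]
  · obtain ⟨s, rfl⟩ : ∃ s, t = (s + 1) / 2 := ⟨2 * t - 1, by ring⟩
    have hs : 0 ≤ s := by linarith
    have hle : meanAbsDev P ((s + 1) / 2) ≤ 1 / 3 - s / 4 + 9 / 32 * s ^ 2 := by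
      have hquad := hP.meanAbsDev_le_quadratic hs
      rw [hP.meanAbsDev_eq_add, hP.meanAbsDev_of_one_le (by linarith),
        show 2 * ((s + 1) / 2) - 1 = s by ring]
      linarith
    calc meanAbsDev P ((s + 1) / 2) ^ 2
        ≤ (1 / 3 - s / 4 + 9 / 32 * s ^ 2) ^ 2 := by gcongr
      _ = (2 / 3 - (s + 1) / 2) ^ 2 + 1 / 12 - 9 / 64 * s ^ 3 * (1 - 9 / 16 * s) := by ring
      _ ≤ (2 / 3 - (s + 1) / 2) ^ 2 + 1 / 12 :=
        sub_le_self _ (mul_nonneg (by positivity) (by linarith))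

lemma le_distortion_pair (hP : SelfSimilar P) (a b : ℝ) : 13 / 612 ≤ distortion P {a, b} := by
  have h := distortion_midpoint_sub_sq_meanAbsDev_le_distortion_pair hP.memLp_id a b
  rw [hP.distortion_singleton_eq] at h
  linarith [hP.sq_meanAbsDev_le ((a + b) / 2)]

lemma le_distortion_pair_zero (hP : SelfSimilar P) (c : ℝ) : 23 / 816 ≤ distortion P {0, c} := by
  have heq := hP.distortion_eq_add (Finset.insert_nonempty 0 {c})
  simp only [Finset.image_insert, Finset.image_singleton, mul_zero, zero_sub] at heq
  rcases le_total c (1 / 2) with hc | hc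
  · have hright : distortion P {0} ≤ distortion P {-1, 2 * c - 1} := by
      refine hP.distortion_le_of_forall_mem_Icc (by simp) fun x hx ↦ ?_
      simp only [Finset.mem_insert, Finset.mem_singleton, forall_eq_or_imp, forall_eq,
        exists_eq_left]
      exact ⟨abs_sub_le_abs_sub_right (by linarith) (by linarith [hx.1]),
        abs_sub_le_abs_sub_right (by linarith) (by linarith [hx.1])⟩
    rw [hP.distortion_singleton_eq] at hright
    linarith [distortion_nonneg P {0, 4 * c}]
  · have hleft : distortion P {0} ≤ distortion P {0, 4 * c} := by
      refine hP.distortion_le_of_forall_mem_Icc (by simp) fun x hx ↦ ?_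
      simp only [Finset.mem_insert, Finset.mem_singleton, forall_eq_or_imp, forall_eq,
        exists_eq_left]
      exact ⟨le_rfl, abs_sub_le_abs_sub_left (by linarith) (by linarith [hx.2])⟩
    have hright : distortion P {min (2 * c - 1) 1} ≤ distortion P {-1, 2 * c - 1} := by
      refine hP.distortion_le_of_forall_mem_Icc (by simp) fun x hx ↦ ?_
      simp only [Finset.mem_insert, Finset.mem_singleton, forall_eq_or_imp, forall_eq,
        exists_eq_left]
      rcases le_total (2 * c - 1) 1 with h | h
      · rw [min_eq_left h]
        exact ⟨abs_sub_le_abs_sub_right (by linarith) (by linarith [hx.1]), le_rfl⟩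
      · rw [min_eq_right h]
        exact ⟨abs_sub_le_abs_sub_right (by linarith) (by linarith [hx.1]),
          abs_sub_le_abs_sub_left h (by linarith [hx.2])⟩
    rw [hP.distortion_singleton_eq] at hleft
    linarith [hP.variance_le_distortion_singleton (min (2 * c - 1) 1)]

lemma distortion_triple_eq_add (hP : SelfSimilar P) (a b c : ℝ) :
    distortion P {a, b, c} = 1 / 64 * distortion P {4 * a, 4 * b, 4 * c} +
      3 / 16 * distortion P {2 * a - 1, 2 * b - 1, 2 * c - 1} := by
  simpa only [Finset.image_insert, Finset.image_singleton] using
    hP.distortion_eq_add (Finset.insert_nonempty a {b, c})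

lemma le_distortion_triple_of_add_le_one (hP : SelfSimilar P) {a b c : ℝ} (hab : a ≤ b)
    (hbc : b ≤ c) (h : b + c ≤ 1) : 55 / 9792 ≤ distortion P {a, b, c} := by
  have hright : distortion P {2 * c - 1} ≤ distortion P {2 * a - 1, 2 * b - 1, 2 * c - 1} := by
    refine hP.distortion_le_of_forall_mem_Icc (by simp) fun x hx ↦ ?_
    simp only [Finset.mem_insert, Finset.mem_singleton, forall_eq_or_imp, forall_eq,
      exists_eq_left]
    exact ⟨abs_sub_le_abs_sub_right (by linarith) (by linarith [hx.1]),
      abs_sub_le_abs_sub_right (by linarith) (by linarith [hx.1]), le_rfl⟩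
  rw [hP.distortion_triple_eq_add]
  linarith [hP.variance_le_distortion_singleton (2 * c - 1),
    distortion_nonneg P {4 * a, 4 * b, 4 * c}]

lemma le_distortion_triple_of_le_half (hP : SelfSimilar P) {a b c : ℝ} (hab : a ≤ b)
    (hb : b ≤ 1 / 2) (hbc : 1 ≤ b + c) : 55 / 9792 ≤ distortion P {a, b, c} := by
  have hleft : distortion P {4 * a, 4 * b} ≤ distortion P {4 * a, 4 * b, 4 * c} := by
    refine hP.distortion_le_of_forall_mem_Icc (by simp) fun x hx ↦ ?_
    simp only [Finset.mem_insert, Finset.mem_singleton, forall_eq_or_imp, forall_eq,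
      exists_eq_or_imp, exists_eq_left]
    exact ⟨.inl le_rfl, .inr le_rfl,
      .inr (abs_sub_le_abs_sub_left (by linarith) (by linarith [hx.2]))⟩
  have hright : distortion P {0, 2 * c - 1} ≤ distortion P {2 * a - 1, 2 * b - 1, 2 * c - 1} := by
    refine hP.distortion_le_of_forall_mem_Icc (by simp) fun x hx ↦ ?_
    simp only [Finset.mem_insert, Finset.mem_singleton, forall_eq_or_imp, forall_eq,
      exists_eq_or_imp, exists_eq_left]
    exact ⟨.inl (abs_sub_le_abs_sub_right (by linarith) (by linarith [hx.1])),
      .inl (abs_sub_le_abs_sub_right (by linarith) (by linarith [hx.1])), .inr le_rfl⟩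
  rw [hP.distortion_triple_eq_add]
  linarith [hP.le_distortion_pair (4 * a) (4 * b), hP.le_distortion_pair_zero (2 * c - 1)]

lemma le_distortion_triple_of_half_le (hP : SelfSimilar P) {a b c : ℝ} (hb : 1 / 2 ≤ b)
    (hbc : b ≤ c) (hab : a + b ≤ 1) : 55 / 9792 ≤ distortion P {a, b, c} := by
  have hleft : distortion P {max (4 * a) 0} ≤ distortion P {4 * a, 4 * b, 4 * c} := by
    refine hP.distortion_le_of_forall_mem_Icc (by simp) fun x hx ↦ ?_
    simp only [Finset.mem_insert, Finset.mem_singleton, forall_eq_or_imp, forall_eq,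
      exists_eq_left]
    rcases le_total (4 * a) 0 with h | h
    · rw [max_eq_right h]
      exact ⟨abs_sub_le_abs_sub_right h (by linarith [hx.1]),
        abs_sub_le_abs_sub_left (by linarith) (by linarith [hx.2]),
        abs_sub_le_abs_sub_left (by linarith) (by linarith [hx.2])⟩
    · rw [max_eq_left h]
      exact ⟨le_rfl, abs_sub_le_abs_sub_left (by linarith) (by linarith [hx.2]),
        abs_sub_le_abs_sub_left (by linarith) (by linarith [hx.2])⟩
  have hright : distortion P {2 * b - 1, 2 * c - 1} ≤
      distortion P {2 * a - 1, 2 * b - 1, 2 * c - 1} := by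
    refine hP.distortion_le_of_forall_mem_Icc (by simp) fun x hx ↦ ?_
    simp only [Finset.mem_insert, Finset.mem_singleton, forall_eq_or_imp, forall_eq,
      exists_eq_or_imp, exists_eq_left]
    exact ⟨.inl (abs_sub_le_abs_sub_right (by linarith) (by linarith [hx.1])),
      .inl le_rfl, .inr le_rfl⟩
  rw [hP.distortion_triple_eq_add]
  linarith [hP.variance_le_distortion_singleton (max (4 * a) 0),
    hP.le_distortion_pair (2 * b - 1) (2 * c - 1)]

-- When `a ≤ 3 / 8`, the piece `S₂ (S₁ [0, 1]) = [1 / 2, 5 / 8]` lies in the gap between `a` and `b`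
-- and is at least as far from `a`, `b` and `c` as from the reflected point `1 - a`.
lemma le_distortion_triple_of_one_le_add (hP : SelfSimilar P) {a b c : ℝ} (hab : a ≤ b)
    (hbc : b ≤ c) (h : 1 ≤ a + b) : 55 / 9792 ≤ distortion P {a, b, c} := by
  have hleft : distortion P {4 * a} ≤ distortion P {4 * a, 4 * b, 4 * c} := by
    refine hP.distortion_le_of_forall_mem_Icc (by simp) fun x hx ↦ ?_
    simp only [Finset.mem_insert, Finset.mem_singleton, forall_eq_or_imp, forall_eq,
      exists_eq_left]
    exact ⟨le_rfl, abs_sub_le_abs_sub_left (by linarith) (by linarith [hx.2]),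
      abs_sub_le_abs_sub_left (by linarith) (by linarith [hx.2])⟩
  rw [hP.distortion_singleton_eq] at hleft
  rw [hP.distortion_triple_eq_add]
  rcases le_total a (3 / 8) with ha | ha
  · have hmiddle : distortion P {4 * (1 - 2 * a)} ≤ distortion P
        {4 * (2 * a - 1), 4 * (2 * b - 1), 4 * (2 * c - 1)} := by
      refine hP.distortion_le_of_forall_mem_Icc (by simp) fun x hx ↦ ?_
      simp only [Finset.mem_insert, Finset.mem_singleton, forall_eq_or_imp, forall_eq,
        exists_eq_left]
      refine ⟨?_, abs_sub_le_abs_sub_left (by linarith) (by linarith [hx.2]),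
        abs_sub_le_abs_sub_left (by linarith) (by linarith [hx.2])⟩
      rw [abs_of_nonpos (by linarith [hx.2]), abs_of_nonneg (by linarith [hx.1])]
      linarith [hx.1]
    rw [hP.distortion_singleton_eq] at hmiddle
    rw [hP.distortion_triple_eq_add (2 * a - 1)]
    nlinarith [sq_nonneg (a - 23 / 84), distortion_nonneg P
      {2 * (2 * a - 1) - 1, 2 * (2 * b - 1) - 1, 2 * (2 * c - 1) - 1}]
  · nlinarith [distortion_nonneg P {2 * a - 1, 2 * b - 1, 2 * c - 1}]

lemma le_distortion_triple (hP : SelfSimilar P) {a b c : ℝ} (hab : a ≤ b) (hbc : b ≤ c) :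
    55 / 9792 ≤ distortion P {a, b, c} := by
  rcases le_total (b + c) 1 with h1 | h1
  · exact hP.le_distortion_triple_of_add_le_one hab hbc h1
  rcases le_total b (1 / 2) with h2 | h2
  · exact hP.le_distortion_triple_of_le_half hab h2 h1
  rcases le_total (a + b) 1 with h3 | h3
  · exact hP.le_distortion_triple_of_half_le h2 hbc h3
  · exact hP.le_distortion_triple_of_one_le_add hab hbc h3

lemma le_distortion_of_card_le_three (hP : SelfSimilar P) {α : Finset ℝ} (hα : α.Nonempty)
    (hcard : α.card ≤ 3) : 55 / 9792 ≤ distortion P α := by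
  obtain ⟨a, b, c, hab, hbc, hsub⟩ := exists_subset_triple_of_card_le_three hcard
  exact (hP.le_distortion_triple hab hbc).trans
    (distortion_anti hP.memLp_id hα fun x hx ↦ by simpa using hsub hx)

lemma distortion_two_means_le (hP : SelfSimilar P) : distortion P {1 / 6, 5 / 6} ≤ 13 / 612 := by
  have heq := hP.distortion_eq_add (Finset.insert_nonempty (1 / 6) {5 / 6})
  have hleft := distortion_anti hP.memLp_id (Finset.singleton_nonempty (2 / 3 : ℝ))
    (β := {2 / 3, 10 / 3}) (by simp)
  have hright := distortion_anti hP.memLp_id (Finset.singleton_nonempty (2 / 3 : ℝ))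
    (β := {-(2 / 3), 2 / 3}) (by simp)
  rw [hP.distortion_singleton_eq] at hleft hright
  norm_num [Finset.image_insert] at heq hleft hright
  linarith

lemma distortion_three_means_le (hP : SelfSimilar P) :
    distortion P {1 / 6, 7 / 12, 11 / 12} ≤ 55 / 9792 := by
  have heq := hP.distortion_triple_eq_add (1 / 6) (7 / 12) (11 / 12)
  have hleft := distortion_anti hP.memLp_id (Finset.singleton_nonempty (2 / 3 : ℝ))
    (β := {2 / 3, 7 / 3, 11 / 3}) (by simp)
  have hright := distortion_anti hP.memLp_id (Finset.insert_nonempty (1 / 6 : ℝ) {5 / 6})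
    (β := {-(2 / 3), 1 / 6, 5 / 6}) (by simp)
  rw [hP.distortion_singleton_eq] at hleft
  have htwo := hP.distortion_two_means_le
  norm_num at heq hleft hright htwo ⊢
  linarith

end SelfSimilar

theorem stmt_10 (P : Measure ℝ) [IsProbabilityMeasure P] (hP : SelfSimilar P) :
    IsOptimal P 3 ({1 / 6, 7 / 12, 11 / 12} : Finset ℝ) ∧
    qError P 3 = 55 / 9792 := by
  have hcard : ({1 / 6, 7 / 12, 11 / 12} : Finset ℝ).card ≤ 3 := Finset.card_le_three
  have hne : ({1 / 6, 7 / 12, 11 / 12} : Finset ℝ).Nonempty := Finset.insert_nonempty _ _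
  have hdist : distortion P {1 / 6, 7 / 12, 11 / 12} = 55 / 9792 :=
    le_antisymm hP.distortion_three_means_le (hP.le_distortion_of_card_le_three hne hcard)
  have hV : qError P 3 = 55 / 9792 := by
    refine IsLeast.csInf_eq ⟨⟨_, hne, hcard, hdist.symm⟩, ?_⟩
    rintro _ ⟨α, hα, hα3, rfl⟩
    exact hP.le_distortion_of_card_le_three hα hα3
  exact ⟨⟨hne, hcard, hdist.trans hV.symm⟩, hV⟩
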